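/- Finite propagation speed for the fractional wave equation: let n ≥ 1, α ∈ (0,1), τ > 0, let c : ℝⁿ → ℝ be smooth with c(x) ≥ c₀ for some constant c₀ > 0, let a : ℝⁿ → ℝ be smooth with a ≥ 0, and let φ : ℝⁿ → ℝ be smooth with c(x)² |∇φ(x)|² ≤ 1 for all x. Let u : ℝ × ℝⁿ → ℝ be smooth, with supp u(t,·) contained in a fixed compact set for all t ∈ [0,τ], satisfying ∂_t² u − c(x)² Δu + a(x) ∂_t^α u = 0 on (0,τ) × ℝⁿ. If u(0,x) = 0 and ∂_t u(0,x) = 0 for every x with φ(x) < τ, then u(t,x) = 0 whenever 0 ≤ t ≤ τ and φ(x) < τ − t. -/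

import Mathlib

open MeasureTheory Set

/-- Partial derivative `∂f/∂xᵢ` of `f : ℝⁿ → ℝ` at `x`. -/
noncomputable def partialD {n : ℕ} (f : (Fin n → ℝ) → ℝ) (i : Fin n) (x : Fin n → ℝ) : ℝ :=
  deriv (fun s => f (Function.update x i s)) (x i)

/-- Second partial derivative `∂²f/∂xᵢ²` of `f : ℝⁿ → ℝ` at `x`. -/
noncomputable def secondPartial {n : ℕ} (f : (Fin n → ℝ) → ℝ) (i : Fin n) (x : Fin n → ℝ) : ℝ :=
  deriv (fun s => deriv (fun r => f (Function.update x i r)) s) (x i)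

/-- The Laplacian of `f : ℝⁿ → ℝ`, i.e. the sum of the second partial derivatives. -/
noncomputable def laplacian {n : ℕ} (f : (Fin n → ℝ) → ℝ) (x : Fin n → ℝ) : ℝ :=
  ∑ i, secondPartial f i x

/-- The Caputo fractional derivative of order `α`:
`∂_t^α f(t) = (1/Γ(1-α)) ∫₀^t (t-s)^{-α} f'(s) ds`. -/
noncomputable def caputo (α : ℝ) (f : ℝ → ℝ) (t : ℝ) : ℝ :=
  (1 / Real.Gamma (1 - α)) * ∫ s in (0:ℝ)..t, (t - s) ^ (-α) * deriv f s

/-- The energy `E(t) = ∫ (c⁻² |∂_t u|² + |∇ₓ u|²) dx`. -/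
noncomputable def energy {n : ℕ} (c : (Fin n → ℝ) → ℝ) (u : ℝ → (Fin n → ℝ) → ℝ) (t : ℝ) : ℝ :=
  ∫ x, (((c x) ^ 2)⁻¹ * (deriv (fun s => u s x) t) ^ 2 + ∑ i, (partialD (u t) i x) ^ 2)

/-!
Weight the energy density `e` of `u` by a function `X` that is positive exactly on the cone and
satisfies `c |∇X| ≤ -∂ₜX`. In `∂ₜ(X e)` the flux of energy against `∇X` is absorbed by `∂ₜX e`, by
Cauchy–Schwarz. The damping does nonnegative work at every point `x`, because
`r^{-α} = Γ(α)⁻¹ ∫₀^∞ l^{α-1} e^{-lr} dl` makes it a superposition of memories `y' = f - l y` driven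
by the velocity `f = ∂ₜu`, and `w f y ≥ (w y²)' / 2` for every nonnegative nonincreasing weight `w`,
in particular for `w = X(·, x)`. Hence `∫ X e dx`, which vanishes initially, stays zero, and
`∂ₜu = 0` on the cone.
-/

/-! ### Dissipative memories -/

/-- The response `∫₀ᵗ e^{-l(t-s)} f(s) ds` of a memory that forgets at the exponential rate `l`;
it solves `y' = f - l y`, `y(0) = 0`. Kernels that are Laplace transforms are superpositions of
such memories. -/
noncomputable def expMemory (l : ℝ) (f : ℝ → ℝ) (t : ℝ) : ℝ :=
  ∫ s in (0 : ℝ)..t, Real.exp (-(l * (t - s))) * f s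

/-- The force `D` is dissipative on `[0, T]` along the velocity `v` if its work, discounted by any
nonnegative nonincreasing `C¹` weight, is nonnegative. -/
def IsDissipative (v D : ℝ → ℝ) (T : ℝ) : Prop :=
  ∀ w : ℝ → ℝ, ContDiff ℝ 1 w → (∀ t, 0 ≤ w t) → Antitone w →
    IntervalIntegrable (fun t => w t * (v t * D t)) volume 0 T ∧
      0 ≤ ∫ t in (0 : ℝ)..T, w t * (v t * D t)

/-- `k` is the Laplace transform of the positive measure `μ` on `[0, ∞)` and is locally integrable
up to `0`. By Bernstein's theorem these are the locally integrable completely monotone kernels. -/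
structure IsLaplaceKernel (μ : Measure ℝ) (k : ℝ → ℝ) : Prop where
  ae_nonneg : ∀ᵐ l ∂μ, 0 ≤ l
  integrable_exp : ∀ r, 0 < r → Integrable (fun l => Real.exp (-(l * r))) μ
  integral_exp : ∀ r, 0 < r → ∫ l, Real.exp (-(l * r)) ∂μ = k r
  intervalIntegrable : ∀ T, 0 ≤ T → IntervalIntegrable k volume 0 T

section Memory

variable {f : ℝ → ℝ}

lemma IsDissipative.const_mul {v D : ℝ → ℝ} {T b : ℝ} (h : IsDissipative v D T) (hb : 0 ≤ b) :
    IsDissipative v (fun t => b * D t) T := by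
  intro w hw hw0 hwa
  obtain ⟨hint, hnonneg⟩ := h w hw hw0 hwa
  have hfactor : (fun t => w t * (v t * (b * D t))) = fun t => b * (w t * (v t * D t)) := by
    ext t; ring
  rw [hfactor, intervalIntegral.integral_const_mul]
  exact ⟨hint.const_mul b, mul_nonneg hb hnonneg⟩

lemma expMemory_eq_exp_mul_integral (l : ℝ) (f : ℝ → ℝ) (t : ℝ) :
    expMemory l f t = Real.exp (-(l * t)) * ∫ s in (0 : ℝ)..t, Real.exp (l * s) * f s := by
  rw [expMemory, ← intervalIntegral.integral_const_mul]
  congr with s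
  rw [← mul_assoc, ← Real.exp_add]
  ring_nf

lemma hasDerivAt_expMemory (hf : Continuous f) (l t : ℝ) :
    HasDerivAt (expMemory l f) (f t - l * expMemory l f t) t := by
  have hintegral : HasDerivAt (fun t => ∫ s in (0 : ℝ)..t, Real.exp (l * s) * f s)
      (Real.exp (l * t) * f t) t :=
    ((by fun_prop : Continuous fun s => Real.exp (l * s) * f s).integral_hasStrictDerivAt
      0 t).hasDerivAt
  have hexp : HasDerivAt (fun t => Real.exp (-(l * t))) (Real.exp (-(l * t)) * -(l * 1)) t :=
    ((hasDerivAt_id t).const_mul l).neg.exp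
  have hcancel : Real.exp (-(l * t)) * Real.exp (l * t) = 1 := by
    rw [← Real.exp_add, neg_add_cancel, Real.exp_zero]
  rw [funext (expMemory_eq_exp_mul_integral l f)]
  refine (hexp.mul hintegral).congr_deriv ?_
  linear_combination f t * hcancel

lemma continuous_uncurry_expMemory (hf : Continuous f) :
    Continuous fun p : ℝ × ℝ => expMemory p.1 f p.2 := by
  simp only [expMemory_eq_exp_mul_integral]
  have hprimitive := intervalIntegral.continuous_parametric_primitive_of_continuous
    (μ := volume) (a₀ := 0) (f := fun l s : ℝ => Real.exp (l * s) * f s)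
    (by simp only [Function.uncurry_def]; fun_prop)
  exact (by fun_prop : Continuous fun p : ℝ × ℝ => Real.exp (-(p.1 * p.2))).mul hprimitive

lemma abs_expMemory_le {M t T : ℝ} (ht : 0 ≤ t) (htT : t ≤ T) (hM : ∀ s ∈ Icc 0 T, |f s| ≤ M)
    (l : ℝ) : |expMemory l f t| ≤ M * expMemory l 1 T := by
  have hM0 : 0 ≤ M := (abs_nonneg _).trans (hM 0 ⟨le_rfl, ht.trans htT⟩)
  have hone (b : ℝ) : expMemory l 1 b = ∫ r in (0 : ℝ)..b, Real.exp (-(l * r)) := by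
    simp [expMemory, intervalIntegral.integral_comp_sub_left (fun r => Real.exp (-(l * r)))]
  have hmono : expMemory l 1 t ≤ expMemory l 1 T := by
    rw [hone, hone]
    exact intervalIntegral.integral_mono_interval le_rfl ht htT
      (Filter.Eventually.of_forall fun r => (Real.exp_pos _).le)
      (Continuous.intervalIntegrable (by fun_prop) _ _)
  have hdom : IntervalIntegrable (fun s => M * Real.exp (-(l * (t - s)))) volume 0 t :=
    Continuous.intervalIntegrable (by fun_prop) _ _
  have hnorm : ‖expMemory l f t‖ ≤ ∫ s in (0 : ℝ)..t, M * Real.exp (-(l * (t - s))) := by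
    refine intervalIntegral.norm_integral_le_of_norm_le ht
      (Filter.Eventually.of_forall fun s hs => ?_) hdom
    rw [norm_mul, Real.norm_of_nonneg (Real.exp_pos _).le, mul_comm]
    exact mul_le_mul_of_nonneg_right (hM s ⟨hs.1.le, hs.2.trans htT⟩) (Real.exp_pos _).le
  calc |expMemory l f t| ≤ ∫ s in (0 : ℝ)..t, M * Real.exp (-(l * (t - s))) := hnorm
    _ = M * expMemory l 1 t := by simp [expMemory]
    _ ≤ M * expMemory l 1 T := mul_le_mul_of_nonneg_left hmono hM0

-- Since `f = y' + l y` for `y = expMemory l f`, the integrand is at least `(w y²)' / 2`.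
lemma integral_mul_expMemory_nonneg (hf : Continuous f) {w : ℝ → ℝ} (hw : ContDiff ℝ 1 w)
    (hw0 : ∀ t, 0 ≤ w t) (hwa : Antitone w) {l T : ℝ} (hl : 0 ≤ l) (hT : 0 ≤ T) :
    0 ≤ ∫ t in (0 : ℝ)..T, w t * (f t * expMemory l f t) := by
  set y := expMemory l f
  have hy : ∀ t, HasDerivAt y (f t - l * y t) t := hasDerivAt_expMemory hf l
  have hyc : Continuous y := continuous_iff_continuousAt.2 fun t => (hy t).continuousAt
  have hwc : Continuous w := hw.continuous
  have hderiv (t : ℝ) : HasDerivAt (fun t => w t * y t ^ 2 / 2)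
      (deriv w t * y t ^ 2 / 2 + w t * y t * (f t - l * y t)) t := by
    refine (((hw.differentiable one_ne_zero t).hasDerivAt.mul ((hy t).pow 2)).div_const
      2).congr_deriv ?_
    simp only [Pi.pow_apply, Nat.cast_ofNat, Nat.add_one_sub_one, pow_one]
    ring
  have hle (t : ℝ) : deriv w t * y t ^ 2 / 2 + w t * y t * (f t - l * y t)
      ≤ w t * (f t * y t) := by
    have hw' : deriv w t * y t ^ 2 ≤ 0 :=
      mul_nonpos_of_nonpos_of_nonneg hwa.deriv_nonpos (sq_nonneg _)
    have hforget : 0 ≤ w t * l * y t ^ 2 := mul_nonneg (mul_nonneg (hw0 t) hl) (sq_nonneg _)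
    linarith
  calc 0 ≤ w T * y T ^ 2 / 2 := div_nonneg (mul_nonneg (hw0 T) (sq_nonneg _)) zero_le_two
    _ = w T * y T ^ 2 / 2 - w 0 * y 0 ^ 2 / 2 := by simp [y, expMemory]
    _ ≤ ∫ t in (0 : ℝ)..T, w t * (f t * y t) :=
      intervalIntegral.sub_le_integral_of_hasDeriv_right_of_le hT
        (fun t _ => (hderiv t).continuousAt.continuousWithinAt)
        (fun t _ => (hderiv t).hasDerivWithinAt)
        ((by fun_prop : Continuous fun t => w t * (f t * y t)).integrableOn_Icc)
        fun t _ => hle t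

namespace IsLaplaceKernel

variable {μ : Measure ℝ} [SFinite μ] {k : ℝ → ℝ}

lemma integrable_exp_mul_prod (hk : IsLaplaceKernel μ k) (hf : Continuous f) {t : ℝ}
    (ht : 0 ≤ t) :
    Integrable (Function.uncurry fun s l : ℝ => Real.exp (-(l * (t - s))) * f s)
      ((volume.restrict (Ioc 0 t)).prod μ) := by
  have hmeas : Measurable (Function.uncurry fun s l : ℝ => Real.exp (-(l * (t - s))) * f s) := by
    simp only [Function.uncurry_def]
    have := hf.measurable
    fun_prop
  have hkint : IntervalIntegrable (fun s => k (t - s) * |f s|) volume 0 t := by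
    have hreflect : IntervalIntegrable (fun s => k (t - s)) volume 0 t := by
      simpa using ((hk.intervalIntegrable t ht).comp_sub_left t).symm
    exact hreflect.mul_continuousOn (by fun_prop)
  rw [← restrict_Ioo_eq_restrict_Ioc, integrable_prod_iff hmeas.aestronglyMeasurable]
  refine ⟨?_, ?_⟩
  · filter_upwards [ae_restrict_mem measurableSet_Ioo] with s hs
    exact (hk.integrable_exp _ (sub_pos.2 hs.2)).mul_const (f s)
  · refine ((intervalIntegrable_iff_integrableOn_Ioo_of_le ht).1 hkint).congr ?_
    filter_upwards [ae_restrict_mem measurableSet_Ioo] with s hs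
    simp [Function.uncurry, integral_mul_const, hk.integral_exp _ (sub_pos.2 hs.2)]

lemma integrable_expMemory (hk : IsLaplaceKernel μ k) (hf : Continuous f) {t : ℝ} (ht : 0 ≤ t) :
    Integrable (fun l => expMemory l f t) μ := by
  simpa only [expMemory, intervalIntegral.integral_of_le ht, Function.uncurry_apply_pair]
    using (hk.integrable_exp_mul_prod hf ht).integral_prod_right

lemma integral_mul_eq_integral_expMemory (hk : IsLaplaceKernel μ k) (hf : Continuous f) {t : ℝ}
    (ht : 0 ≤ t) :
    ∫ s in (0 : ℝ)..t, k (t - s) * f s = ∫ l, expMemory l f t ∂μ := by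
  simp only [expMemory, intervalIntegral.integral_of_le ht]
  rw [← integral_integral_swap (hk.integrable_exp_mul_prod hf ht), ← restrict_Ioo_eq_restrict_Ioc]
  refine setIntegral_congr_fun measurableSet_Ioo fun s hs => ?_
  simp only [integral_mul_const, hk.integral_exp _ (sub_pos.2 hs.2)]

lemma integrable_mul_expMemory_prod (hk : IsLaplaceKernel μ k) (hf : Continuous f) {g : ℝ → ℝ}
    (hg : Continuous g) {T : ℝ} (hT : 0 ≤ T) :
    Integrable (Function.uncurry fun t l : ℝ => g t * expMemory l f t)
      ((volume.restrict (Ioc 0 T)).prod μ) := by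
  obtain ⟨M, hM⟩ := (isCompact_Icc (a := 0) (b := T)).exists_bound_of_continuousOn hf.continuousOn
  have hdom : Integrable (fun p : ℝ × ℝ => g p.1 * (M * expMemory p.2 1 T))
      ((volume.restrict (Ioc 0 T)).prod μ) :=
    Integrable.mul_prod (hg.integrableOn_Icc.mono_set Ioc_subset_Icc_self)
      ((hk.integrable_expMemory continuous_one hT).const_mul M)
  refine hdom.mono ?_ ?_
  · exact ((hg.comp continuous_fst).mul
      ((continuous_uncurry_expMemory hf).comp continuous_swap)).aestronglyMeasurable
  · have hmem : ∀ᵐ p ∂(volume.restrict (Ioc 0 T)).prod μ, p.1 ∈ Ioc 0 T :=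
      Measure.quasiMeasurePreserving_fst.ae (ae_restrict_mem measurableSet_Ioc)
    filter_upwards [hmem] with p hp
    simp only [Function.uncurry, norm_mul]
    rw [← norm_mul M]
    gcongr
    exact (abs_expMemory_le hp.1.le hp.2 hM p.2).trans (le_abs_self _)

lemma isDissipative (hk : IsLaplaceKernel μ k) (hf : Continuous f) {T : ℝ} (hT : 0 ≤ T) :
    IsDissipative f (fun t => ∫ s in (0 : ℝ)..t, k (t - s) * f s) T := by
  intro w hw hw0 hwa
  have hint : Integrable (Function.uncurry fun t l : ℝ => w t * f t * expMemory l f t)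
      ((volume.restrict (Ioc 0 T)).prod μ) :=
    hk.integrable_mul_expMemory_prod hf (hw.continuous.mul hf) hT
  have hsuperpose : EqOn (fun t => ∫ l, w t * f t * expMemory l f t ∂μ)
      (fun t => w t * (f t * ∫ s in (0 : ℝ)..t, k (t - s) * f s)) (Ioc 0 T) := fun t ht => by
    simp only [integral_const_mul, hk.integral_mul_eq_integral_expMemory hf ht.1.le, mul_assoc]
  refine ⟨?_, ?_⟩
  · rw [intervalIntegrable_iff_integrableOn_Ioc_of_le hT]
    exact IntegrableOn.congr_fun hint.integral_prod_left hsuperpose measurableSet_Ioc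
  · rw [intervalIntegral.integral_of_le hT,
      ← setIntegral_congr_fun measurableSet_Ioc hsuperpose, integral_integral_swap hint]
    refine integral_nonneg_of_ae ?_
    filter_upwards [hk.ae_nonneg] with l hl
    simpa only [Pi.zero_apply, intervalIntegral.integral_of_le hT, mul_assoc]
      using integral_mul_expMemory_nonneg hf hw hw0 hwa hl hT

end IsLaplaceKernel

lemma isLaplaceKernel_rpow_neg {α : ℝ} (hα : α ∈ Ioo (0 : ℝ) 1) :
    IsLaplaceKernel ((volume.restrict (Ioi 0)).withDensity
      fun l => ENNReal.ofReal ((Real.Gamma α)⁻¹ * l ^ (α - 1))) fun r => r ^ (-α) := by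
  have hΓ : 0 < Real.Gamma α := Real.Gamma_pos_of_pos hα.1
  have hmeas : Measurable fun l : ℝ => ENNReal.ofReal ((Real.Gamma α)⁻¹ * l ^ (α - 1)) := by
    fun_prop
  have hdensity (r : ℝ) : EqOn
      (fun l => (ENNReal.ofReal ((Real.Gamma α)⁻¹ * l ^ (α - 1))).toReal • Real.exp (-(l * r)))
      (fun l => (Real.Gamma α)⁻¹ * (l ^ (α - 1) * Real.exp (-(r * l)))) (Ioi 0) := fun l hl => by
    have hl0 : (0 : ℝ) ≤ l ^ (α - 1) := Real.rpow_nonneg (le_of_lt hl) _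
    simp only [ENNReal.toReal_ofReal (mul_nonneg (inv_nonneg.2 hΓ.le) hl0), smul_eq_mul,
      mul_comm l r, mul_assoc]
  have hgamma (r : ℝ) (hr : 0 < r) := Real.integral_rpow_mul_exp_neg_mul_Ioi hα.1 hr
  refine ⟨?_, fun r hr => ?_, fun r hr => ?_, fun T _ => ?_⟩
  · exact (withDensity_absolutelyContinuous _ _).ae_le
      ((ae_restrict_mem measurableSet_Ioi).mono fun l hl => le_of_lt hl)
  · rw [integrable_withDensity_iff_integrable_smul' hmeas (by simp)]
    refine IntegrableOn.congr_fun (Integrable.const_mul ?_ _) (hdensity r).symm measurableSet_Ioi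
    refine .of_integral_ne_zero ?_
    rw [hgamma r hr]
    positivity
  · rw [integral_withDensity_eq_integral_toReal_smul hmeas (by simp),
      setIntegral_congr_fun measurableSet_Ioi (hdensity r), integral_const_mul, hgamma r hr,
      one_div, Real.inv_rpow hr.le, Real.rpow_neg hr.le]
    field_simp
  · exact intervalIntegral.intervalIntegrable_rpow' (by linarith [hα.2])

lemma isDissipative_caputo {α : ℝ} (hα : α ∈ Ioo (0 : ℝ) 1) (hf : ContDiff ℝ 1 f) {T : ℝ}
    (hT : 0 ≤ T) : IsDissipative (deriv f) (caputo α f) T :=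
  ((isLaplaceKernel_rpow_neg hα).isDissipative (hf.continuous_deriv le_rfl) hT).const_mul
    (one_div_nonneg.2 (Real.Gamma_pos_of_pos (sub_pos.2 hα.2)).le)

end Memory

/-! ### Directional derivatives -/

/-- The derivative of `f` in the direction `v`, through the Fréchet derivative, so that
`dirDeriv v f` is again a function to which regularity and symmetry results apply. -/
noncomputable def dirDeriv {E : Type*} [NormedAddCommGroup E] [NormedSpace ℝ E] (v : E)
    (f : E → ℝ) (p : E) : ℝ :=
  fderiv ℝ f p v

section DirDeriv

variable {E : Type*} [NormedAddCommGroup E] [NormedSpace ℝ E] {f g : E → ℝ} {p : E}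

lemma contDiff_dirDeriv {m k : WithTop ℕ∞} (hf : ContDiff ℝ k f) (hmk : m + 1 ≤ k) (v : E) :
    ContDiff ℝ m (dirDeriv v f) :=
  (hf.fderiv_right hmk).clm_apply contDiff_const

lemma dirDeriv_comm (hf : ContDiff ℝ 2 f) (v w : E) :
    dirDeriv v (dirDeriv w f) = dirDeriv w (dirDeriv v f) := by
  have hiterate (v w : E) (p : E) :
      dirDeriv v (dirDeriv w f) p = fderiv ℝ (fderiv ℝ f) p v w := by
    have hd : DifferentiableAt ℝ (fderiv ℝ f) p :=
      (hf.fderiv_right (m := 1) le_rfl).differentiable one_ne_zero p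
    change fderiv ℝ (fun q => fderiv ℝ f q w) p v = _
    simp [fderiv_clm_apply hd (differentiableAt_const w)]
  ext p
  rw [hiterate, hiterate]
  exact (hf.contDiffAt.isSymmSndFDerivAt (by simp)) v w

lemma dirDeriv_mul (hf : DifferentiableAt ℝ f p) (hg : DifferentiableAt ℝ g p) (v : E) :
    dirDeriv v (fun q => f q * g q) p = f p * dirDeriv v g p + dirDeriv v f p * g p := by
  simp only [dirDeriv, fderiv_fun_mul hf hg, add_apply, smul_apply, smul_eq_mul, mul_comm (g p)]

lemma dirDeriv_eqOn_zero {O : Set E} (hO : IsOpen O) (hf : EqOn f 0 O) (v : E) :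
    EqOn (dirDeriv v f) 0 O := fun p hp => by
  have hlocal : f =ᶠ[nhds p] 0 := hf.eventuallyEq_of_mem (hO.mem_nhds hp)
  simp [dirDeriv, hlocal.fderiv_eq]

lemma hasDerivAt_comp_update {n : ℕ} {f : (Fin n → ℝ) → ℝ} (hf : Differentiable ℝ f)
    (x : Fin n → ℝ) (i : Fin n) (s : ℝ) :
    HasDerivAt (fun r => f (Function.update x i r))
      (dirDeriv (Pi.single i 1) f (Function.update x i s)) s :=
  (hf _).hasFDerivAt.comp_hasDerivAt s (hasDerivAt_update x i s)

lemma partialD_eq_dirDeriv {n : ℕ} {f : (Fin n → ℝ) → ℝ} (hf : Differentiable ℝ f) (i : Fin n)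
    (x : Fin n → ℝ) : partialD f i x = dirDeriv (Pi.single i 1) f x := by
  rw [partialD, (hasDerivAt_comp_update hf x i (x i)).deriv, Function.update_eq_self]

lemma laplacian_eq_sum_dirDeriv {n : ℕ} {f : (Fin n → ℝ) → ℝ} (hf : ContDiff ℝ 2 f)
    (x : Fin n → ℝ) :
    laplacian f x = ∑ i, dirDeriv (Pi.single i 1) (dirDeriv (Pi.single i 1) f) x := by
  refine Finset.sum_congr rfl fun i _ => ?_
  have hinner : Differentiable ℝ (dirDeriv (Pi.single i 1) f) :=
    (contDiff_dirDeriv hf (m := 1) le_rfl _).differentiable one_ne_zero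
  simp only [secondPartial, (hasDerivAt_comp_update (hf.differentiable two_ne_zero) x i _).deriv,
    (hasDerivAt_comp_update hinner x i _).deriv, Function.update_eq_self]

lemma integrable_dirDeriv_of_hasCompactSupport [MeasurableSpace E] [OpensMeasurableSpace E]
    {μ : Measure E} [IsFiniteMeasureOnCompacts μ] (hf : ContDiff ℝ 1 f)
    (hsupp : HasCompactSupport f) (v : E) : Integrable (dirDeriv v f) μ :=
  (contDiff_dirDeriv (m := 0) hf (by simp) v).continuous.integrable_of_hasCompactSupport
    (hsupp.fderiv_apply (𝕜 := ℝ) v)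

lemma integral_dirDeriv_eq_zero [FiniteDimensional ℝ E] [MeasurableSpace E] [BorelSpace E]
    {μ : Measure E} [μ.IsAddHaarMeasure] (hf : ContDiff ℝ 1 f) (hsupp : HasCompactSupport f)
    (v : E) : ∫ x, dirDeriv v f x ∂μ = 0 := by
  have hf' : Integrable (fun x => fderiv ℝ f x v) μ :=
    integrable_dirDeriv_of_hasCompactSupport hf hsupp v
  simpa [dirDeriv] using integral_mul_fderiv_eq_neg_fderiv_mul_of_integrable (μ := μ)
    (f := fun _ => (1 : ℝ)) (g := f) (v := v) (by simp) (by simpa using hf')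
    (by simpa using hf.continuous.integrable_of_hasCompactSupport hsupp) (by simp)
    (fun x _ => hf.differentiable one_ne_zero x)

end DirDeriv

section Integral

variable {E : Type*} [TopologicalSpace E] [MeasurableSpace E] [BorelSpace E] {μ : Measure E}
  [IsFiniteMeasureOnCompacts μ] {K : Set E}

lemma setIntegral_intervalIntegral_eq_zero [T2Space E] [SecondCountableTopology E] [SFinite μ]
    {Q : ℝ × E → ℝ} (hQ : Continuous Q) (hK : IsCompact K) {T : ℝ} (hT : 0 ≤ T)
    (hzero : ∀ t ∈ Ioc 0 T, ∫ x in K, Q (t, x) ∂μ = 0) :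
    ∫ x in K, (∫ t in (0 : ℝ)..T, Q (t, x)) ∂μ = 0 := by
  have hint : IntegrableOn Q (Icc 0 T ×ˢ K) (volume.prod μ) :=
    hQ.continuousOn.integrableOn_compact (isCompact_Icc.prod hK)
  rw [← intervalIntegral_integral_swap (f := fun t x => Q (t, x)),
    intervalIntegral.integral_of_le hT]
  · exact setIntegral_eq_zero_of_forall_eq_zero hzero
  · rw [uIoc_of_le hT, Measure.prod_restrict]
    exact hint.mono_set (prod_mono Ioc_subset_Icc_self subset_rfl)

lemma eq_zero_of_setIntegral_nonpos [R1Space E] [μ.IsOpenPosMeasure] {g : E → ℝ}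
    (hg : Continuous g) (hg0 : 0 ≤ g) (hK : IsCompact K) (hoff : ∀ x ∉ K, g x = 0)
    (hint : ∫ x in K, g x ∂μ ≤ 0) : g = 0 := by
  by_contra hne
  obtain ⟨x, hx⟩ := Function.ne_iff.1 hne
  have hpos := hg.integral_pos_of_hasCompactSupport_nonneg_nonzero (μ := μ)
    (HasCompactSupport.intro hK hoff) hg0 hx
  rw [setIntegral_eq_integral_of_forall_compl_eq_zero hoff] at hint
  exact hint.not_gt hpos

end Integral

/-! ### The weighted energy -/

local notation:max "∂ₜ" => dirDeriv ((1 : ℝ), (0 : Fin _ → ℝ))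

local notation:max "∂ₓ[" i "]" => dirDeriv ((0 : ℝ), (Pi.single i 1 : Fin _ → ℝ))

/-- The energy density `(c⁻² |∂ₜu|² + |∇u|²) / 2` of the wave operator `∂ₜ² - c² Δ`. -/
noncomputable def energyDensity {n : ℕ} (c : (Fin n → ℝ) → ℝ) (u : ℝ × (Fin n → ℝ) → ℝ)
    (p : ℝ × (Fin n → ℝ)) : ℝ :=
  ((c p.2 ^ 2)⁻¹ * ∂ₜ u p ^ 2 + ∑ i, ∂ₓ[i] u p ^ 2) / 2

/-- The spatial divergence of the weighted energy flux `X ∂ₜu ∇u`. -/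
noncomputable def fluxDivergence {n : ℕ} (X u : ℝ × (Fin n → ℝ) → ℝ) (p : ℝ × (Fin n → ℝ)) : ℝ :=
  ∑ i, ∂ₓ[i] (fun q => X q * (∂ₜ u q * ∂ₓ[i] u q)) p

/-- A nonnegative `C¹` weight on space-time whose level sets move with speed at least `c`:
`c |∇X| ≤ -∂ₜX`. Energy cannot cross such level sets outwards. -/
structure IsTimelikeWeight {n : ℕ} (c : (Fin n → ℝ) → ℝ) (X : ℝ × (Fin n → ℝ) → ℝ) : Prop where
  contDiff : ContDiff ℝ 1 X
  nonneg : ∀ p, 0 ≤ X p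
  timeDeriv_nonpos : ∀ p, ∂ₜ X p ≤ 0
  sq_gradient_le : ∀ p, c p.2 ^ 2 * ∑ i, ∂ₓ[i] X p ^ 2 ≤ ∂ₜ X p ^ 2

/-- A smooth weight that is positive exactly on the part `φ(x) < τ - t` of space-time. -/
noncomputable def coneWeight {n : ℕ} (τ : ℝ) (φ : (Fin n → ℝ) → ℝ) (p : ℝ × (Fin n → ℝ)) : ℝ :=
  expNegInvGlue (τ - p.1 - φ p.2)

section SpaceTime

variable {n : ℕ} {F X u : ℝ × (Fin n → ℝ) → ℝ} {c φ : (Fin n → ℝ) → ℝ} {t : ℝ} {x : Fin n → ℝ}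

lemma hasDerivAt_time (hF : DifferentiableAt ℝ F (t, x)) :
    HasDerivAt (fun s => F (s, x)) (∂ₜ F (t, x)) t :=
  hF.hasFDerivAt.comp_hasDerivAt t ((hasDerivAt_id t).prodMk (hasDerivAt_const t x))

lemma spaceDeriv_eq_dirDeriv_slice (hF : DifferentiableAt ℝ F (t, x)) (i : Fin n) :
    ∂ₓ[i] F (t, x) = dirDeriv (Pi.single i 1) (fun y => F (t, y)) x := by
  have hslice : HasFDerivAt (fun y => F (t, y)) _ x :=
    hF.hasFDerivAt.comp x (hasFDerivAt_prodMk_right t x)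
  rw [dirDeriv, dirDeriv, hslice.fderiv]
  rfl

lemma laplacian_slice (hF : ContDiff ℝ 2 F) :
    laplacian (fun y => F (t, y)) x = ∑ i, ∂ₓ[i] (∂ₓ[i] F) (t, x) := by
  have hslice : ContDiff ℝ 2 fun y => F (t, y) := hF.comp (contDiff_const.prodMk contDiff_id)
  rw [laplacian_eq_sum_dirDeriv hslice]
  refine Finset.sum_congr rfl fun i _ => ?_
  have hF' : Differentiable ℝ (∂ₓ[i] F) :=
    (contDiff_dirDeriv hF (m := 1) le_rfl _).differentiable one_ne_zero
  rw [spaceDeriv_eq_dirDeriv_slice (hF' _)]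
  simp only [spaceDeriv_eq_dirDeriv_slice (hF.differentiable two_ne_zero _)]

lemma energyDensity_nonneg (p : ℝ × (Fin n → ℝ)) : 0 ≤ energyDensity c u p := by
  unfold energyDensity
  positivity

lemma continuous_energyDensity (hc : Continuous c) (hc0 : ∀ x, c x ≠ 0) (hu : ContDiff ℝ 1 u) :
    Continuous (energyDensity c u) := by
  have hu' (v : ℝ × (Fin n → ℝ)) : Continuous (dirDeriv v u) :=
    (contDiff_dirDeriv hu (m := 0) (by simp) v).continuous
  have hc2 : Continuous fun p : ℝ × (Fin n → ℝ) => (c p.2 ^ 2)⁻¹ :=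
    ((hc.comp continuous_snd).pow 2).inv₀ fun p => pow_ne_zero 2 (hc0 p.2)
  unfold energyDensity
  fun_prop

lemma timeDeriv_eq_zero_of_energyDensity_eq_zero {p : ℝ × (Fin n → ℝ)} (hc0 : c p.2 ≠ 0)
    (h : energyDensity c u p = 0) : ∂ₜ u p = 0 := by
  have hgrad : 0 ≤ ∑ i, ∂ₓ[i] u p ^ 2 := Finset.sum_nonneg fun i _ => sq_nonneg _
  by_contra hne
  have hkin : 0 < (c p.2 ^ 2)⁻¹ * ∂ₜ u p ^ 2 := by positivity
  unfold energyDensity at h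
  linarith

lemma hasDerivAt_energyDensity (hu : ContDiff ℝ 2 u) (c : (Fin n → ℝ) → ℝ) (t : ℝ)
    (x : Fin n → ℝ) :
    HasDerivAt (fun s => energyDensity c u (s, x))
      ((c x ^ 2)⁻¹ * (∂ₜ u (t, x) * ∂ₜ (∂ₜ u) (t, x)) +
        ∑ i, ∂ₓ[i] u (t, x) * ∂ₜ (∂ₓ[i] u) (t, x)) t := by
  have hsq (v : ℝ × (Fin n → ℝ)) : HasDerivAt (fun s => dirDeriv v u (s, x) ^ 2)
      (2 * (dirDeriv v u (t, x) * ∂ₜ (dirDeriv v u) (t, x))) t := by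
    have hu' : Differentiable ℝ (dirDeriv v u) :=
      (contDiff_dirDeriv hu (m := 1) le_rfl v).differentiable one_ne_zero
    exact ((hasDerivAt_time (hu' (t, x))).pow 2).congr_deriv (by push_cast; ring)
  have hpotential := HasDerivAt.fun_sum (u := Finset.univ)
    fun (i : Fin n) _ => hsq (0, Pi.single i 1)
  refine ((((hsq (1, 0)).const_mul ((c x ^ 2)⁻¹)).add hpotential).div_const 2).congr_deriv ?_
  rw [← Finset.mul_sum]
  ring

lemma fluxDivergence_eq (hX : ContDiff ℝ 1 X) (hu : ContDiff ℝ 2 u) (p : ℝ × (Fin n → ℝ)) :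
    fluxDivergence X u p = ∂ₜ u p * ∑ i, ∂ₓ[i] X p * ∂ₓ[i] u p +
      X p * (∑ i, ∂ₓ[i] u p * ∂ₜ (∂ₓ[i] u) p + ∂ₜ u p * ∑ i, ∂ₓ[i] (∂ₓ[i] u) p) := by
  have hu' (v : ℝ × (Fin n → ℝ)) : Differentiable ℝ (dirDeriv v u) :=
    (contDiff_dirDeriv hu (m := 1) le_rfl v).differentiable one_ne_zero
  simp only [fluxDivergence, Finset.mul_sum, ← Finset.sum_add_distrib]
  refine Finset.sum_congr rfl fun i _ => ?_
  have hprod : DifferentiableAt ℝ (fun q => ∂ₜ u q * ∂ₓ[i] u q) p := (hu' _ p).mul (hu' _ p)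
  rw [dirDeriv_mul (hX.differentiable one_ne_zero p) hprod,
    dirDeriv_mul (hu' _ p) (hu' _ p), dirDeriv_comm hu (0, Pi.single i 1) (1, 0)]
  ring

lemma continuous_fluxDivergence (hX : ContDiff ℝ 1 X) (hu : ContDiff ℝ 2 u) :
    Continuous (fluxDivergence X u) := by
  have hu' (v : ℝ × (Fin n → ℝ)) : ContDiff ℝ 1 (dirDeriv v u) := contDiff_dirDeriv hu le_rfl v
  exact continuous_finsetSum _ fun i _ =>
    (contDiff_dirDeriv (m := 0) (hX.mul ((hu' _).mul (hu' _))) (by simp) _).continuous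

lemma energyDensity_eqOn_zero {O : Set (ℝ × (Fin n → ℝ))} (hO : IsOpen O) (hu : EqOn u 0 O) :
    EqOn (energyDensity c u) 0 O := fun p hp => by
  have hu' (v : ℝ × (Fin n → ℝ)) : dirDeriv v u p = 0 := dirDeriv_eqOn_zero hO hu v hp
  simp [energyDensity, hu']

lemma setIntegral_fluxDivergence_eq_zero (hX : ContDiff ℝ 1 X) (hu : ContDiff ℝ 2 u)
    {O : Set (ℝ × (Fin n → ℝ))} (hO : IsOpen O) (huO : EqOn u 0 O) {K : Set (Fin n → ℝ)}
    (hK : IsCompact K) (hKO : ∀ x ∉ K, (t, x) ∈ O) :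
    ∫ x in K, fluxDivergence X u (t, x) = 0 := by
  set P : Fin n → ℝ × (Fin n → ℝ) → ℝ := fun i q => X q * (∂ₜ u q * ∂ₓ[i] u q)
  have hu' (v : ℝ × (Fin n → ℝ)) : ContDiff ℝ 1 (dirDeriv v u) := contDiff_dirDeriv hu le_rfl v
  have hP (i : Fin n) : ContDiff ℝ 1 (P i) := hX.mul ((hu' _).mul (hu' _))
  have hPO (i : Fin n) : EqOn (P i) 0 O := fun q hq => by
    simp [P, dirDeriv_eqOn_zero hO huO _ hq]
  have hslice (i : Fin n) : ContDiff ℝ 1 fun y => P i (t, y) :=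
    (hP i).comp (contDiff_const.prodMk contDiff_id)
  have hcompact (i : Fin n) : HasCompactSupport fun y => P i (t, y) :=
    HasCompactSupport.intro hK fun y hy => hPO i (hKO y hy)
  have hoff (x : Fin n → ℝ) (hx : x ∉ K) : fluxDivergence X u (t, x) = 0 :=
    Finset.sum_eq_zero fun i _ => dirDeriv_eqOn_zero hO (hPO i) _ (hKO x hx)
  have hdiv (x : Fin n → ℝ) : fluxDivergence X u (t, x) =
      ∑ i, dirDeriv (Pi.single i 1) (fun y => P i (t, y)) x :=
    Finset.sum_congr rfl fun i _ =>
      spaceDeriv_eq_dirDeriv_slice ((hP i).differentiable one_ne_zero _) i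
  rw [setIntegral_eq_integral_of_forall_compl_eq_zero hoff]
  simp only [hdiv]
  rw [integral_finsetSum _ fun i _ =>
    integrable_dirDeriv_of_hasCompactSupport (hslice i) (hcompact i) _]
  exact Finset.sum_eq_zero fun i _ => integral_dirDeriv_eq_zero (hslice i) (hcompact i) _

lemma mul_sum_mul_le_energy {ι : Type*} [Fintype ι] {a m v : ℝ} {d w : ι → ℝ} (ha : a ≠ 0)
    (hm : 0 ≤ m) (hd : a ^ 2 * ∑ i, d i ^ 2 ≤ m ^ 2) :
    v * ∑ i, d i * w i ≤ m * (((a ^ 2)⁻¹ * v ^ 2 + ∑ i, w i ^ 2) / 2) := by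
  set S := ∑ i, d i * w i
  set A := ∑ i, w i ^ 2
  have : 0 ≤ A := Finset.sum_nonneg fun i _ => sq_nonneg _
  have hS : (a * S) ^ 2 ≤ m ^ 2 * A :=
    calc (a * S) ^ 2 = a ^ 2 * S ^ 2 := mul_pow _ _ _
      _ ≤ a ^ 2 * ((∑ i, d i ^ 2) * A) := by
        gcongr
        exact Finset.sum_mul_sq_le_sq_mul_sq Finset.univ d w
      _ ≤ m ^ 2 * A := by rw [← mul_assoc]; gcongr
  have hv : (a ^ 2)⁻¹ * v ^ 2 = (v / a) ^ 2 := by rw [div_pow, inv_mul_eq_div]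
  have hvS : v * S = v / a * (a * S) := by field_simp
  rw [hv, hvS]
  refine abs_le_of_sq_le_sq ?_ (by positivity) |>.trans' (le_abs_self _)
  calc (v / a * (a * S)) ^ 2 = (v / a) ^ 2 * (a * S) ^ 2 := mul_pow _ _ _
    _ ≤ (v / a) ^ 2 * (m ^ 2 * A) := by gcongr
    _ = m ^ 2 * ((v / a) ^ 2 * A) := by ring
    _ ≤ m ^ 2 * (((v / a) ^ 2 + A) / 2) ^ 2 := by
      gcongr
      linarith [sq_nonneg ((v / a) ^ 2 - A)]
    _ = (m * (((v / a) ^ 2 + A) / 2)) ^ 2 := (mul_pow _ _ _).symm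

-- The second summand is nonpositive for timelike weights; the third is the power of the force.
lemma hasDerivAt_mul_energyDensity (hX : ContDiff ℝ 1 X) (hu : ContDiff ℝ 2 u)
    (c : (Fin n → ℝ) → ℝ) (t : ℝ) (x : Fin n → ℝ) :
    HasDerivAt (fun s => X (s, x) * energyDensity c u (s, x))
      (fluxDivergence X u (t, x) +
        (∂ₜ X (t, x) * energyDensity c u (t, x) -
          ∂ₜ u (t, x) * ∑ i, ∂ₓ[i] X (t, x) * ∂ₓ[i] u (t, x)) +
        X (t, x) * (∂ₜ u (t, x) *
          ((c x ^ 2)⁻¹ * ∂ₜ (∂ₜ u) (t, x) - ∑ i, ∂ₓ[i] (∂ₓ[i] u) (t, x)))) t := by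
  refine ((hasDerivAt_time (hX.differentiable one_ne_zero (t, x))).mul
    (hasDerivAt_energyDensity hu c t x)).congr_deriv ?_
  rw [fluxDivergence_eq hX hu]
  ring

namespace IsTimelikeWeight

lemma antitone_time (hX : IsTimelikeWeight c X) (x : Fin n → ℝ) :
    Antitone fun t => X (t, x) :=
  antitone_of_hasDerivAt_nonpos
    (fun _ => hasDerivAt_time (hX.contDiff.differentiable one_ne_zero _))
    fun _ => hX.timeDeriv_nonpos _

lemma timeDeriv_mul_energyDensity_le (hX : IsTimelikeWeight c X) {p : ℝ × (Fin n → ℝ)}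
    (hc0 : c p.2 ≠ 0) (u : ℝ × (Fin n → ℝ) → ℝ) :
    ∂ₜ X p * energyDensity c u p ≤ ∂ₜ u p * ∑ i, ∂ₓ[i] X p * ∂ₓ[i] u p := by
  have hflux := mul_sum_mul_le_energy (v := -∂ₜ u p) (w := fun i => ∂ₓ[i] u p) hc0
    (neg_nonneg.2 (hX.timeDeriv_nonpos p)) (by simpa using hX.sq_gradient_le p)
  rw [neg_sq] at hflux
  unfold energyDensity
  linarith

lemma mul_energyDensity_le_integral (hX : IsTimelikeWeight c X) (hc0 : c x ≠ 0)
    (hu : ContDiff ℝ 2 u) {D : ℝ → ℝ} {T : ℝ} (hT : 0 ≤ T)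
    (hwave : ∀ t ∈ Ioo 0 T, ∂ₜ (∂ₜ u) (t, x) - c x ^ 2 * ∑ i, ∂ₓ[i] (∂ₓ[i] u) (t, x) + D t = 0)
    (hD : IsDissipative (fun t => ∂ₜ u (t, x)) D T)
    (hinit : X (0, x) * energyDensity c u (0, x) = 0) :
    X (T, x) * energyDensity c u (T, x) ≤ ∫ t in (0 : ℝ)..T, fluxDivergence X u (t, x) := by
  set Q := fluxDivergence X u
  set work : ℝ → ℝ := fun t => X (t, x) * (∂ₜ u (t, x) * D t)
  obtain ⟨hwork, hwork0⟩ := hD (fun t => X (t, x))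
    (hX.contDiff.comp (contDiff_id.prodMk contDiff_const)) (fun _ => hX.nonneg _)
    (hX.antitone_time x)
  have hQ : IntervalIntegrable (fun t => Q (t, x)) volume 0 T :=
    ((continuous_fluxDivergence hX.contDiff hu).comp
      (continuous_id.prodMk continuous_const)).intervalIntegrable _ _
  have hderiv := hasDerivAt_mul_energyDensity hX.contDiff hu c (x := x)
  have hgrowth : X (T, x) * energyDensity c u (T, x) - X (0, x) * energyDensity c u (0, x)
      ≤ ∫ t in (0 : ℝ)..T, (Q (t, x) - (c x ^ 2)⁻¹ * work t) := by
    refine intervalIntegral.sub_le_integral_of_hasDeriv_right_of_le hT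
      (fun t _ => (hderiv t).continuousAt.continuousWithinAt)
      (fun t _ => (hderiv t).hasDerivWithinAt)
      ((intervalIntegrable_iff_integrableOn_Icc_of_le hT).1 (hQ.sub (hwork.const_mul _)))
      fun t ht => ?_
    have hflux := hX.timeDeriv_mul_energyDensity_le (p := (t, x)) hc0 u
    have hforce : (c x ^ 2)⁻¹ * ∂ₜ (∂ₜ u) (t, x) - ∑ i, ∂ₓ[i] (∂ₓ[i] u) (t, x)
        = -((c x ^ 2)⁻¹ * D t) := by
      have hcancel : (c x ^ 2)⁻¹ * c x ^ 2 = 1 := inv_mul_cancel₀ (pow_ne_zero 2 hc0)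
      linear_combination (c x ^ 2)⁻¹ * hwave t ht + (∑ i, ∂ₓ[i] (∂ₓ[i] u) (t, x)) * hcancel
    rw [hforce]
    linarith
  rw [hinit, sub_zero, intervalIntegral.integral_sub hQ (hwork.const_mul _),
    intervalIntegral.integral_const_mul] at hgrowth
  exact hgrowth.trans (sub_le_self _ (mul_nonneg (by positivity) hwork0))

lemma mul_energyDensity_initial_eq_zero (hX : IsTimelikeWeight c X) (hu : Differentiable ℝ u)
    (hinit : ∀ x, 0 < X (0, x) → u (0, x) = 0 ∧ ∂ₜ u (0, x) = 0) (x : Fin n → ℝ) :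
    X (0, x) * energyDensity c u (0, x) = 0 := by
  obtain hpos | hzero := (hX.nonneg (0, x)).lt_or_eq
  · have hopen : IsOpen {y | 0 < X (0, y)} :=
      isOpen_lt continuous_const (hX.contDiff.continuous.comp (by fun_prop))
    have hgrad (i : Fin n) : ∂ₓ[i] u (0, x) = 0 := by
      rw [spaceDeriv_eq_dirDeriv_slice (hu _)]
      exact dirDeriv_eqOn_zero hopen (fun y hy => (hinit y hy).1) _ hpos
    simp [energyDensity, hgrad, (hinit x hpos).2]
  · rw [← hzero, zero_mul]

lemma mul_energyDensity_eq_zero (hX : IsTimelikeWeight c X) (hc : Continuous c)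
    (hc0 : ∀ x, c x ≠ 0) (hu : ContDiff ℝ 2 u) {D : ℝ → (Fin n → ℝ) → ℝ} {K : Set (Fin n → ℝ)}
    (hK : IsCompact K) {τ : ℝ} (huK : EqOn u 0 (Ioo 0 τ ×ˢ Kᶜ))
    (hwave : ∀ t ∈ Ioo 0 τ, ∀ x,
      ∂ₜ (∂ₜ u) (t, x) - c x ^ 2 * ∑ i, ∂ₓ[i] (∂ₓ[i] u) (t, x) + D t x = 0)
    (hD : ∀ T ∈ Ioo 0 τ, ∀ x, IsDissipative (fun t => ∂ₜ u (t, x)) (fun t => D t x) T)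
    (hinit : ∀ x, 0 < X (0, x) → u (0, x) = 0 ∧ ∂ₜ u (0, x) = 0) {T : ℝ} (hT : T ∈ Ioo 0 τ) :
    (fun x => X (T, x) * energyDensity c u (T, x)) = 0 := by
  have hO : IsOpen (Ioo 0 τ ×ˢ Kᶜ) := isOpen_Ioo.prod hK.isClosed.isOpen_compl
  have hcont : Continuous fun x => X (T, x) * energyDensity c u (T, x) :=
    (hX.contDiff.continuous.mul (continuous_energyDensity hc hc0 (hu.of_le one_le_two))).comp
      (continuous_const.prodMk continuous_id)
  have hQ := continuous_fluxDivergence hX.contDiff hu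
  have hQint : Continuous fun x => ∫ t in (0 : ℝ)..T, fluxDivergence X u (t, x) :=
    intervalIntegral.continuous_parametric_intervalIntegral_of_continuous'
      (f := fun x t => fluxDivergence X u (t, x)) (hQ.comp continuous_swap) 0 T
  have hflux : ∫ x in K, ∫ t in (0 : ℝ)..T, fluxDivergence X u (t, x) = 0 :=
    setIntegral_intervalIntegral_eq_zero hQ hK hT.1.le fun t ht =>
      setIntegral_fluxDivergence_eq_zero hX.contDiff hu hO huK hK
        fun x hx => ⟨⟨ht.1, ht.2.trans_lt hT.2⟩, hx⟩
  refine eq_zero_of_setIntegral_nonpos (μ := volume) hcont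
    (fun x => mul_nonneg (hX.nonneg _) (energyDensity_nonneg _)) hK
    (fun x hx => ?_) (hflux ▸ ?_)
  · simp [energyDensity_eqOn_zero hO huK (show (T, x) ∈ Ioo 0 τ ×ˢ Kᶜ from ⟨hT, hx⟩)]
  · exact setIntegral_mono (hcont.continuousOn.integrableOn_compact hK)
      (hQint.continuousOn.integrableOn_compact hK) fun x =>
        hX.mul_energyDensity_le_integral (hc0 x) hu hT.1.le
          (fun t ht => hwave t ⟨ht.1, ht.2.trans hT.2⟩ x) (hD T hT x)
          (hX.mul_energyDensity_initial_eq_zero (hu.differentiable two_ne_zero) hinit x)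

end IsTimelikeWeight

lemma coneWeight_pos_iff {τ : ℝ} : 0 < coneWeight τ φ (t, x) ↔ φ x < τ - t := by
  rw [← sub_pos (b := φ x)]
  refine ⟨fun h => ?_, expNegInvGlue.pos_of_pos⟩
  by_contra hle
  exact h.ne' (expNegInvGlue.zero_of_nonpos (not_lt.1 hle))

lemma isTimelikeWeight_coneWeight (hφ : ContDiff ℝ 1 φ)
    (hφgrad : ∀ x, c x ^ 2 * ∑ i, partialD φ i x ^ 2 ≤ 1) (τ : ℝ) :
    IsTimelikeWeight c (coneWeight τ φ) := by
  set χ' : ℝ × (Fin n → ℝ) → ℝ := fun p => deriv expNegInvGlue (τ - p.1 - φ p.2)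
  have hχ (s : ℝ) : HasDerivAt expNegInvGlue (deriv expNegInvGlue s) s :=
    (expNegInvGlue.contDiff.differentiable one_ne_zero s).hasDerivAt
  have hX : ContDiff ℝ 1 (coneWeight τ φ) :=
    expNegInvGlue.contDiff.comp
      ((contDiff_const.sub contDiff_fst).sub (hφ.comp contDiff_snd))
  have hXdiff : Differentiable ℝ (coneWeight τ φ) := hX.differentiable one_ne_zero
  have htime (p : ℝ × (Fin n → ℝ)) : ∂ₜ (coneWeight τ φ) p = -χ' p := by
    refine (hasDerivAt_time (hXdiff p)).unique ?_
    exact ((hχ _).comp p.1 (((hasDerivAt_id p.1).const_sub τ).sub_const (φ p.2))).congr_deriv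
      (mul_neg_one _)
  have hspace (p : ℝ × (Fin n → ℝ)) (i : Fin n) :
      ∂ₓ[i] (coneWeight τ φ) p = -χ' p * partialD φ i p.2 := by
    have hφdiff : DifferentiableAt ℝ φ p.2 := hφ.differentiable one_ne_zero p.2
    have hslice := (hχ (τ - p.1 - φ p.2)).comp_hasFDerivAt p.2
      (hφdiff.hasFDerivAt.const_sub (τ - p.1))
    rw [spaceDeriv_eq_dirDeriv_slice (hXdiff p),
      partialD_eq_dirDeriv (hφ.differentiable one_ne_zero), neg_mul, ← mul_neg]
    exact congrArg (fun L => L (Pi.single i 1)) hslice.fderiv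
  refine ⟨hX, fun p => expNegInvGlue.nonneg _, fun p => ?_, fun p => ?_⟩
  · rw [htime]
    exact neg_nonpos.2 expNegInvGlue.monotone.deriv_nonneg
  · calc c p.2 ^ 2 * ∑ i, ∂ₓ[i] (coneWeight τ φ) p ^ 2
        = χ' p ^ 2 * (c p.2 ^ 2 * ∑ i, partialD φ i p.2 ^ 2) := by
          simp only [hspace, mul_pow, neg_sq, ← Finset.mul_sum]
          ring
      _ ≤ χ' p ^ 2 * 1 := by gcongr; exact hφgrad p.2
      _ = ∂ₜ (coneWeight τ φ) p ^ 2 := by rw [htime, mul_one, neg_sq]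

end SpaceTime

theorem finite_propagation_speed_fracWave_general {n : ℕ} {τ : ℝ} {c φ : (Fin n → ℝ) → ℝ}
    {u D : ℝ → (Fin n → ℝ) → ℝ} {K : Set (Fin n → ℝ)} (hc : Continuous c) (hc0 : ∀ x, c x ≠ 0)
    (hφ : ContDiff ℝ 1 φ) (hφgrad : ∀ x, c x ^ 2 * ∑ i, partialD φ i x ^ 2 ≤ 1)
    (hu : ContDiff ℝ 2 (Function.uncurry u)) (hK : IsCompact K)
    (hsupp : ∀ t ∈ Ioo 0 τ, Function.support (u t) ⊆ K)
    (hwave : ∀ t ∈ Ioo 0 τ, ∀ x, deriv (deriv fun s => u s x) t - c x ^ 2 * laplacian (u t) x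
      + D t x = 0)
    (hD : ∀ T ∈ Ioo 0 τ, ∀ x, IsDissipative (deriv fun s => u s x) (fun t => D t x) T)
    (hinit : ∀ x, φ x < τ → u 0 x = 0 ∧ deriv (fun s => u s x) 0 = 0) :
    ∀ t x, 0 ≤ t → t ≤ τ → φ x < τ - t → u t x = 0 := by
  set U := Function.uncurry u
  have hudiff (x : Fin n → ℝ) (t : ℝ) : HasDerivAt (fun s => u s x) (∂ₜ U (t, x)) t :=
    hasDerivAt_time (hu.differentiable two_ne_zero _)
  have hut (x : Fin n → ℝ) : deriv (fun s => u s x) = fun t => ∂ₜ U (t, x) :=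
    funext fun t => (hudiff x t).deriv
  have hutt (t : ℝ) (x : Fin n → ℝ) : deriv (fun s => ∂ₜ U (s, x)) t = ∂ₜ (∂ₜ U) (t, x) :=
    (hasDerivAt_time ((contDiff_dirDeriv hu le_rfl _).differentiable one_ne_zero _)).deriv
  simp only [hut, hutt] at hwave hD hinit
  have henergy {T : ℝ} (hT : T ∈ Ioo 0 τ) :=
    (isTimelikeWeight_coneWeight hφ hφgrad τ).mul_energyDensity_eq_zero hc hc0 hu hK
      (fun p hp => Function.notMem_support.1 fun h => hp.2 (hsupp p.1 hp.1 h))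
      (fun t ht x => by rw [← laplacian_slice hu]; exact hwave t ht x) hD
      (fun x hx => hinit x (by simpa using coneWeight_pos_iff.1 hx)) hT
  have hrest (s : ℝ) (x : Fin n → ℝ) (hs : s ∈ Ioo 0 τ) (hsx : φ x < τ - s) :
      ∂ₜ U (s, x) = 0 :=
    timeDeriv_eq_zero_of_energyDensity_eq_zero (hc0 x)
      ((mul_eq_zero.1 (congrFun (henergy hs) x)).resolve_left (coneWeight_pos_iff.2 hsx).ne')
  intro t x ht htτ hx
  have hftc : ∫ _ in (0 : ℝ)..t, (0 : ℝ) = u t x - u 0 x :=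
    intervalIntegral.integral_eq_sub_of_hasDerivAt_of_le ht
      (fun s _ => (hudiff x s).continuousAt.continuousWithinAt)
      (fun s hs => hrest s x ⟨hs.1, hs.2.trans_le htτ⟩ (by linarith [hs.2]) ▸ hudiff x s)
      intervalIntegrable_const
  have hconst : u t x = u 0 x := by
    rw [intervalIntegral.integral_zero] at hftc
    exact sub_eq_zero.1 hftc.symm
  exact hconst.trans (hinit x (by linarith)).1

/-- Finite propagation speed for the fractionally attenuated wave equation: if the Cauchy
data vanish on `{φ < τ}` where `c²|∇φ|² ≤ 1`, then `u` vanishes on the backward cone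
`{(t,x) : 0 ≤ t ≤ τ, φ(x) < τ − t}`. -/
theorem finite_propagation_speed_fracWave {n : ℕ} (hn : 1 ≤ n) (α τ : ℝ)
    (hα : α ∈ Ioo (0:ℝ) 1) (hτ : 0 < τ) (c a : (Fin n → ℝ) → ℝ) (c₀ : ℝ) (hc₀ : 0 < c₀)
    (hc : ContDiff ℝ (⊤ : ℕ∞) c) (hcge : ∀ x, c₀ ≤ c x)
    (ha : ContDiff ℝ (⊤ : ℕ∞) a) (hage : ∀ x, 0 ≤ a x)
    (φ : (Fin n → ℝ) → ℝ) (hφ : ContDiff ℝ (⊤ : ℕ∞) φ)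
    (hφgrad : ∀ x, (c x) ^ 2 * ∑ i, (partialD φ i x) ^ 2 ≤ 1)
    (u : ℝ → (Fin n → ℝ) → ℝ)
    (hu : ContDiff ℝ (⊤ : ℕ∞) (fun p : ℝ × (Fin n → ℝ) => u p.1 p.2))
    (K : Set (Fin n → ℝ)) (hK : IsCompact K)
    (hsupp : ∀ t ∈ Icc (0:ℝ) τ, Function.support (u t) ⊆ K)
    (hpde : ∀ t ∈ Ioo (0:ℝ) τ, ∀ x,
      deriv (fun s => deriv (fun r => u r x) s) t - (c x) ^ 2 * laplacian (u t) x
        + a x * caputo α (fun s => u s x) t = 0)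
    (hinit : ∀ x, φ x < τ → u 0 x = 0 ∧ deriv (fun s => u s x) 0 = 0) :
    ∀ t x, 0 ≤ t → t ≤ τ → φ x < τ - t → u t x = 0 :=
  finite_propagation_speed_fracWave_general hc.continuous (fun x => (hc₀.trans_le (hcge x)).ne')
    (contDiff_infty.1 hφ 1) hφgrad (contDiff_infty.1 hu 2) hK
    (fun t ht => hsupp t (Ioo_subset_Icc_self ht)) hpde
    (fun _ hT x => (isDissipative_caputo hα
      ((contDiff_infty.1 hu 1).comp (contDiff_prodMk_left x)) hT.1.le).const_mul (hage x)) hinit
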